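/- Characterization of definite provability: for every propositional defeasible theory T and literal q, T ⊢ +Δq if and only if M_Δ(q)=True for every defeasible model M of T. -/

import Mathlib

/-- A literal is an atom or its negation. -/
inductive Lit (Atom : Type) where
  | pos : Atom → Lit Atom
  | neg : Atom → Lit Atom
  deriving DecidableEq

/-- The complement `~q` of a literal `q`. -/
def Lit.compl {Atom : Type} : Lit Atom → Lit Atom
  | .pos a => .neg a
  | .neg a => .pos a

/-- The three kinds of rules: strict, defeasible, defeater. -/
inductive RuleKind where
  | strict
  | defeasible
  | defeater
  deriving DecidableEq

/-- A rule: a kind, a finite set of literals as body (antecedent), and a head literal. -/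
structure DRule (Atom : Type) where
  kind : RuleKind
  body : Finset (Lit Atom)
  head : Lit Atom
  deriving DecidableEq

/-- A rule is strict-or-defeasible (a "supportive" rule). -/
def DRule.isSd {Atom : Type} (r : DRule Atom) : Prop :=
  r.kind = RuleKind.strict ∨ r.kind = RuleKind.defeasible

/-- A propositional defeasible theory: finite set of facts, finite set of rules,
and a superiority relation on rules. -/
structure DTheory (Atom : Type) where
  facts : Finset (Lit Atom)
  rules : Finset (DRule Atom)
  sup : DRule Atom → DRule Atom → Prop

/-- Acyclicity of the superiority relation. -/
def SupAcyclic {Atom : Type} (T : DTheory Atom) : Prop :=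
  ∀ r : DRule Atom, ¬ Relation.TransGen T.sup r r

/-- Conclusions: tagged literals +Δq, -Δq, +∂q, -∂q. -/
inductive Concl (Atom : Type) where
  | plusDelta : Lit Atom → Concl Atom
  | minusDelta : Lit Atom → Concl Atom
  | plusPartial : Lit Atom → Concl Atom
  | minusPartial : Lit Atom → Concl Atom
  deriving DecidableEq

/-- The inference rules of DL: `Licensed T prev c` holds when the conclusion `c`
may be appended to a derivation whose preceding part is `prev`. -/
def Licensed {Atom : Type} (T : DTheory Atom)
    (prev : List (Concl Atom)) : Concl Atom → Prop
  | .plusDelta q =>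
      q ∈ T.facts ∨
      ∃ r ∈ T.rules, r.kind = RuleKind.strict ∧ r.head = q ∧
        ∀ a ∈ r.body, Concl.plusDelta a ∈ prev
  | .minusDelta q =>
      q ∉ T.facts ∧
      ∀ r ∈ T.rules, r.kind = RuleKind.strict → r.head = q →
        ∃ a ∈ r.body, Concl.minusDelta a ∈ prev
  | .plusPartial q =>
      (Concl.plusDelta q ∈ prev) ∨
      ((∃ r ∈ T.rules, r.isSd ∧ r.head = q ∧
          ∀ a ∈ r.body, Concl.plusPartial a ∈ prev) ∧
       (Concl.minusDelta q.compl ∈ prev) ∧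
       ∀ s ∈ T.rules, s.head = q.compl →
         ((∃ a ∈ s.body, Concl.minusPartial a ∈ prev) ∨
          (∃ t ∈ T.rules, t.isSd ∧ t.head = q ∧ T.sup t s ∧
            ∀ a ∈ t.body, Concl.plusPartial a ∈ prev)))
  | .minusPartial q =>
      (Concl.minusDelta q ∈ prev) ∧
      ((∀ r ∈ T.rules, r.isSd → r.head = q →
          ∃ a ∈ r.body, Concl.minusPartial a ∈ prev) ∨
       (Concl.plusDelta q.compl ∈ prev) ∨
       (∃ s ∈ T.rules, s.head = q.compl ∧
          (∀ a ∈ s.body, Concl.plusPartial a ∈ prev) ∧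
          ∀ t ∈ T.rules, t.isSd → t.head = q →
            ((∃ a ∈ t.body, Concl.minusPartial a ∈ prev) ∨ ¬ T.sup t s)))

/-- A derivation: each element of the sequence is licensed given the preceding part. -/
def DLDerivation {Atom : Type} (T : DTheory Atom)
    (P : List (Concl Atom)) : Prop :=
  ∀ i : Fin P.length, Licensed T (P.take i) (P.get i)

/-- `T ⊢ c`: some derivation in `T` ends with conclusion `c`. -/
def DLProves {Atom : Type} (T : DTheory Atom) (c : Concl Atom) : Prop :=
  ∃ P : List (Concl Atom), DLDerivation T P ∧ P.getLast? = some c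

/-- A defeasible interpretation: two partial functions from literals to booleans
(modelled as `Option Bool`-valued functions), `del` for definite knowledge (Δ) and
`par` for defeasible belief (∂). -/
structure DInterp (Atom : Type) where
  del : Lit Atom → Option Bool
  par : Lit Atom → Option Bool

/-- The coherence conditions on defeasible interpretations: what is known is believed,
and what is not believed is not known. -/
def DInterp.Coherent {Atom : Type} (I : DInterp Atom) : Prop :=
  (∀ q : Lit Atom, I.del q = some true → I.par q = some true) ∧
  (∀ q : Lit Atom, I.par q = some false → I.del q = some false)

open Classical in
/-- Kleene conjunction of a partial boolean function over a finite set of literals: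
`False` if some member maps to `False`, `True` if every member maps to `True`,
undefined otherwise. -/
noncomputable def kleeneAll {Atom : Type} (f : Lit Atom → Option Bool)
    (S : Finset (Lit Atom)) : Option Bool :=
  if ∃ a ∈ S, f a = some false then some false
  else if ∀ a ∈ S, f a = some true then some true
  else none

/-- The four model conditions (MΔ+), (MΔ-), (M∂+), (M∂-). -/
def ModelConditions {Atom : Type} (T : DTheory Atom)
    (I : DInterp Atom) : Prop :=
  (∀ q : Lit Atom,
    I.del q = some true ↔
      (q ∈ T.facts ∨
       ∃ r ∈ T.rules, r.kind = RuleKind.strict ∧ r.head = q ∧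
         kleeneAll I.del r.body = some true)) ∧
  (∀ q : Lit Atom,
    I.del q = some false ↔
      (q ∉ T.facts ∧
       ∀ r ∈ T.rules, r.kind = RuleKind.strict → r.head = q →
         kleeneAll I.del r.body = some false)) ∧
  (∀ q : Lit Atom,
    I.par q = some true ↔
      (I.del q = some true ∨
       ((∃ r ∈ T.rules, r.isSd ∧ r.head = q ∧ kleeneAll I.par r.body = some true) ∧
        I.del q.compl = some false ∧
        ∀ s ∈ T.rules, s.head = q.compl →
          (kleeneAll I.par s.body = some false ∨
           ∃ t ∈ T.rules, t.isSd ∧ t.head = q ∧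
             kleeneAll I.par t.body = some true ∧ T.sup t s)))) ∧
  (∀ q : Lit Atom,
    I.par q = some false ↔
      (I.del q = some false ∧
       ((∀ r ∈ T.rules, r.isSd → r.head = q → kleeneAll I.par r.body = some false) ∨
        I.del q.compl = some true ∨
        (∃ s ∈ T.rules, s.head = q.compl ∧ kleeneAll I.par s.body = some true ∧
          ∀ t ∈ T.rules, t.isSd → t.head = q →
            (kleeneAll I.par t.body = some false ∨ ¬ T.sup t s)))))

/-- A defeasible model of `T`: a defeasible interpretation (coherent pair of partial
functions) satisfying the four model conditions. -/
def IsModel {Atom : Type} (T : DTheory Atom) (I : DInterp Atom) : Prop :=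
  I.Coherent ∧ ModelConditions T I

/-- A conclusion holds in an interpretation. -/
def DLHolds {Atom : Type} (I : DInterp Atom) : Concl Atom → Prop
  | .plusDelta q => I.del q = some true
  | .minusDelta q => I.del q = some false
  | .plusPartial q => I.par q = some true
  | .minusPartial q => I.par q = some false


/-!
The provable conclusions form the least set closed under licensing, and licensing is compact: it
depends only on the finitely many premises about the literals in rule bodies, about `q` and about
`~q`. The same compactness turns the model conditions into a fixed-point equation: `I` is a model
exactly when it satisfies precisely the conclusions licensed by what it satisfies. Leastness gives
soundness. Conversely, the set of provable conclusions is itself a fixed point, and it never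
contains two opposite conclusions, because opposite conclusions can only be licensed by clashing
premises; so it is the set of conclusions holding in some model, and that model refutes every
unprovable conclusion.
-/

namespace Concl

variable {Atom : Type}

/-- The literal that a conclusion is about. -/
def lit : Concl Atom → Lit Atom
  | plusDelta q | minusDelta q | plusPartial q | minusPartial q => q

/-- The conclusion refuting a given one: the same literal, with the sign of the tag reversed. -/
def opposite : Concl Atom → Concl Atom
  | plusDelta q => minusDelta q
  | minusDelta q => plusDelta q
  | plusPartial q => minusPartial q
  | minusPartial q => plusPartial q

theorem opposite_opposite (c : Concl Atom) : c.opposite.opposite = c := by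
  cases c <;> rfl

theorem forall_iff {p : Concl Atom → Prop} :
    (∀ c, p c) ↔ (∀ q, p (plusDelta q)) ∧ (∀ q, p (minusDelta q)) ∧
      (∀ q, p (plusPartial q)) ∧ ∀ q, p (minusPartial q) :=
  ⟨fun h => ⟨fun _ => h _, fun _ => h _, fun _ => h _, fun _ => h _⟩,
    fun ⟨h₁, h₂, h₃, h₄⟩ c => by cases c <;> solve_by_elim⟩

theorem exists_list_mem_iff (L : List (Lit Atom)) (C : Set (Concl Atom)) :
    ∃ P : List (Concl Atom), ∀ c, c ∈ P ↔ c.lit ∈ L ∧ c ∈ C := by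
  classical
  refine ⟨(L.flatMap fun a => [plusDelta a, minusDelta a, plusPartial a, minusPartial a]).filter
    (· ∈ C), fun c => ?_⟩
  cases c <;> simp [lit]

end Concl

section Kleene

variable {Atom : Type} {f : Lit Atom → Option Bool} {S : Finset (Lit Atom)}

theorem kleeneAll_eq_true_iff : kleeneAll f S = some true ↔ ∀ a ∈ S, f a = some true := by
  unfold kleeneAll
  split_ifs with h₁ h₂ <;> grind

theorem kleeneAll_eq_false_iff : kleeneAll f S = some false ↔ ∃ a ∈ S, f a = some false := by
  unfold kleeneAll
  split_ifs with h₁ h₂ <;> grind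

end Kleene

section Characterization

variable {Atom : Type} {T : DTheory Atom} {q : Lit Atom} {P Q : List (Concl Atom)}
  {c : Concl Atom} {C : Set (Concl Atom)} {I : DInterp Atom}

section Licensing

/-- The literals on which the licensing of a conclusion about `q` depends. There are only finitely
many, which makes licensing compact. -/
def DTheory.Relevant (T : DTheory Atom) (q a : Lit Atom) : Prop :=
  a = q ∨ a = q.compl ∨ ∃ r ∈ T.rules, a ∈ r.body

theorem Licensed.of_forall_relevant (h : Licensed T P c)
    (hPQ : ∀ d ∈ P, T.Relevant c.lit d.lit → d ∈ Q) : Licensed T Q c := by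
  cases c <;>
    simp only [Licensed, DTheory.Relevant, Concl.lit, Concl.forall_iff] at h hPQ ⊢ <;> grind

theorem Licensed.mono (h : Licensed T P c) (hPQ : P ⊆ Q) : Licensed T Q c :=
  h.of_forall_relevant fun _ hd _ => hPQ hd

theorem Licensed.not_licensed_minusDelta (hPQ : ∀ d ∈ P, d.opposite ∉ Q)
    (hP : Licensed T P (.plusDelta q)) : ¬ Licensed T Q (.minusDelta q) := by
  rintro ⟨hfact, hrules⟩
  rcases hP with hq | ⟨r, hr, hstrict, hhead, hbody⟩
  · exact hfact hq
  · obtain ⟨a, ha, haQ⟩ := hrules r hr hstrict hhead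
    exact hPQ _ (hbody a ha) haQ

theorem Licensed.not_licensed_minusPartial (hPQ : ∀ d ∈ P, d.opposite ∉ Q)
    (hP : Licensed T P (.plusPartial q)) : ¬ Licensed T Q (.minusPartial q) := by
  rintro ⟨hq, hminus⟩
  rcases hP with hq' | ⟨⟨r, hr, hsd, hhead, hbody⟩, hcompl, hattacks⟩
  · exact hPQ _ hq' hq
  · rcases hminus with hrules | hcompl' | ⟨s, hs, hshead, hsbody, hdefence⟩
    · obtain ⟨a, ha, haQ⟩ := hrules r hr hsd hhead
      exact hPQ _ (hbody a ha) haQ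
    · exact hPQ _ hcompl hcompl'
    · rcases hattacks s hs hshead with ⟨a, ha, haP⟩ | ⟨t, ht, htsd, hthead, hts, htbody⟩
      · exact hPQ _ haP (hsbody a ha)
      · rcases hdefence t ht htsd hthead with ⟨a, ha, haQ⟩ | hnts
        · exact hPQ _ (htbody a ha) haQ
        · exact hnts hts

theorem Licensed.not_licensed_opposite (hPQ : ∀ d ∈ P, d.opposite ∉ Q) (hP : Licensed T P c) :
    ¬ Licensed T Q c.opposite := by
  have hQP : ∀ d ∈ Q, d.opposite ∉ P := fun d hQ hP => hPQ _ hP (by rwa [d.opposite_opposite])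
  cases c with
  | plusDelta => exact hP.not_licensed_minusDelta hPQ
  | minusDelta => exact fun hQ => hQ.not_licensed_minusDelta hQP hP
  | plusPartial => exact hP.not_licensed_minusPartial hPQ
  | minusPartial => exact fun hQ => hQ.not_licensed_minusPartial hQP hP

/-- Licensing from an arbitrary, possibly infinite set `C` of premises: some finite sequence drawn
from `C` licenses `c`. Both provability and satisfaction in a model are fixed points of it. -/
def LicensedFrom (T : DTheory Atom) (C : Set (Concl Atom)) (c : Concl Atom) : Prop :=
  ∃ P : List (Concl Atom), (∀ d ∈ P, d ∈ C) ∧ Licensed T P c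

theorem DTheory.exists_list_mem_iff_relevant (T : DTheory Atom) (C : Set (Concl Atom))
    (q : Lit Atom) :
    ∃ P : List (Concl Atom), ∀ d, d ∈ P ↔ T.Relevant q d.lit ∧ d ∈ C := by
  simpa [Relevant] using Concl.exists_list_mem_iff
    (q :: q.compl :: T.rules.toList.flatMap (·.body.toList)) C

theorem licensedFrom_iff_licensed (hP : ∀ d, d ∈ P ↔ T.Relevant c.lit d.lit ∧ d ∈ C) :
    LicensedFrom T C c ↔ Licensed T P c := by
  constructor
  · rintro ⟨Q, hQ, h⟩
    exact h.of_forall_relevant fun d hd hrel => (hP d).2 ⟨hrel, hQ d hd⟩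
  · exact fun h => ⟨P, fun d hd => ((hP d).1 hd).2, h⟩

end Licensing

section Models

theorem modelConditions_iff :
    ModelConditions T I ↔ ∀ c, DLHolds I c ↔ LicensedFrom T {d | DLHolds I d} c := by
  rw [Concl.forall_iff]
  refine and_congr ?_ (and_congr ?_ (and_congr ?_ ?_)) <;>
  · refine forall_congr' fun q => iff_congr Iff.rfl ?_
    obtain ⟨P, hP⟩ := T.exists_list_mem_iff_relevant {d | DLHolds I d} q
    rw [licensedFrom_iff_licensed hP]
    -- `P` decides each premise the clause for `q` queries, so the clause is its model condition.
    simp only [Licensed, hP, DTheory.Relevant, Concl.lit, Set.mem_ofPred_eq, DLHolds,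
      kleeneAll_eq_true_iff, kleeneAll_eq_false_iff]
    grind

theorem ModelConditions.coherent (h : ModelConditions T I) : I.Coherent :=
  ⟨fun q hq => (h.2.2.1 q).2 (.inl hq), fun q hq => ((h.2.2.2 q).1 hq).1⟩

theorem isModel_iff : IsModel T I ↔ ∀ c, DLHolds I c ↔ LicensedFrom T {d | DLHolds I d} c :=
  ⟨fun h => modelConditions_iff.1 h.2, fun h =>
    have hI := modelConditions_iff.2 h
    ⟨hI.coherent, hI⟩⟩

open Classical in
/-- The interpretation in which exactly the conclusions in `C` hold, for `C` without opposite
conclusions; should `C` contain a pair of opposite conclusions, the positive one wins. -/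
noncomputable def DInterp.ofConclusions (C : Set (Concl Atom)) : DInterp Atom where
  del q := if .plusDelta q ∈ C then some true else if .minusDelta q ∈ C then some false else none
  par q :=
    if .plusPartial q ∈ C then some true else if .minusPartial q ∈ C then some false else none

theorem DInterp.dlHolds_ofConclusions (hC : ∀ c ∈ C, c.opposite ∉ C) :
    DLHolds (ofConclusions C) c ↔ c ∈ C := by
  simp only [Concl.forall_iff, Concl.opposite] at hC
  cases c <;> simp only [DLHolds, ofConclusions] <;> grind

end Models

section Derivations

theorem dlDerivation_concat :
    DLDerivation T (P ++ [c]) ↔ DLDerivation T P ∧ Licensed T P c := by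
  simp only [DLDerivation, Fin.forall_iff, List.length_append, List.length_singleton,
    List.get_eq_getElem]
  rw [Nat.forall_lt_succ_right']
  refine and_congr (forall₂_congr fun i hi => ?_) ?_
  · rw [List.take_append_of_le_length hi.le, List.getElem_append_left hi]
  · simp

theorem DLDerivation.append (hP : DLDerivation T P) (hQ : DLDerivation T Q) :
    DLDerivation T (P ++ Q) := by
  induction Q using List.reverseRecOn with
  | nil => simpa using hP
  | append_singleton Q c ih =>
    obtain ⟨hQ, hc⟩ := dlDerivation_concat.1 hQ
    rw [← List.append_assoc, dlDerivation_concat]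
    exact ⟨ih hQ, hc.mono (List.subset_append_right P Q)⟩

theorem dlProves_iff_exists_licensed :
    DLProves T c ↔ ∃ P, DLDerivation T P ∧ Licensed T P c := by
  simp only [DLProves, List.getLast?_eq_some_iff]
  constructor
  · rintro ⟨_, hP, P, rfl⟩
    exact ⟨P, dlDerivation_concat.1 hP⟩
  · rintro ⟨P, hP⟩
    exact ⟨P ++ [c], dlDerivation_concat.2 hP, P, rfl⟩

theorem DLDerivation.dlProves_of_mem (hP : DLDerivation T P) (hc : c ∈ P) : DLProves T c := by
  induction P using List.reverseRecOn with
  | nil => simp at hc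
  | append_singleton P d ih =>
    have hPd := dlDerivation_concat.1 hP
    rcases List.mem_append.1 hc with hc | hc
    · exact ih hPd.1 hc
    · rw [List.mem_singleton.1 hc]
      exact dlProves_iff_exists_licensed.2 ⟨P, hPd⟩

theorem exists_derivation_superset (hP : ∀ d ∈ P, DLProves T d) :
    ∃ D, DLDerivation T D ∧ P ⊆ D := by
  induction P with
  | nil => exact ⟨[], fun i => i.elim0, List.nil_subset _⟩
  | cons c P ih =>
    rw [List.forall_mem_cons] at hP
    obtain ⟨D, hD, hPD⟩ := ih hP.2
    obtain ⟨E, hE, hc⟩ := hP.1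
    exact ⟨E ++ D, hE.append hD, List.cons_subset.2
      ⟨List.mem_append_left D (List.mem_of_getLast? hc), List.subset_append_of_subset_right E hPD⟩⟩

theorem dlProves_iff_licensedFrom : DLProves T c ↔ LicensedFrom T {d | DLProves T d} c := by
  constructor
  · intro h
    obtain ⟨P, hP, hc⟩ := dlProves_iff_exists_licensed.1 h
    exact ⟨P, fun d hd => hP.dlProves_of_mem hd, hc⟩
  · rintro ⟨P, hP, hc⟩
    obtain ⟨D, hD, hPD⟩ := exists_derivation_superset hP
    exact dlProves_iff_exists_licensed.2 ⟨D, hD, hc.mono hPD⟩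

theorem DLDerivation.mem_of_closed (hC : ∀ c, LicensedFrom T C c → c ∈ C)
    (hP : DLDerivation T P) : ∀ c ∈ P, c ∈ C := by
  induction P using List.reverseRecOn with
  | nil => simp
  | append_singleton P c ih =>
    obtain ⟨hP, hc⟩ := dlDerivation_concat.1 hP
    simpa [or_imp, forall_and] using ⟨ih hP, hC c ⟨P, ih hP, hc⟩⟩

theorem DLProves.mem_of_closed (hC : ∀ c, LicensedFrom T C c → c ∈ C) (h : DLProves T c) :
    c ∈ C := by
  obtain ⟨P, hP, hc⟩ := h
  exact hP.mem_of_closed hC c (List.mem_of_getLast? hc)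

theorem DLProves.not_dlProves_opposite (h : DLProves T c) : ¬ DLProves T c.opposite := by
  refine h.mem_of_closed (C := {d | ¬ DLProves T d.opposite}) ?_
  rintro d ⟨P, hP, hd⟩ hd'
  obtain ⟨Q, hQ, hdQ⟩ := dlProves_iff_licensedFrom.1 hd'
  exact hd.not_licensed_opposite (fun e heP heQ => hP e heP (hQ _ heQ)) hdQ

end Derivations

theorem DLProves.dlHolds (h : DLProves T c) (hI : IsModel T I) : DLHolds I c :=
  h.mem_of_closed (C := {d | DLHolds I d}) fun d => (isModel_iff.1 hI d).2

theorem dlHolds_ofConclusions_dlProves :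
    DLHolds (.ofConclusions {d | DLProves T d}) c ↔ DLProves T c :=
  DInterp.dlHolds_ofConclusions fun _ h => DLProves.not_dlProves_opposite h

theorem isModel_ofConclusions_dlProves : IsModel T (.ofConclusions {d | DLProves T d}) := by
  simpa only [isModel_iff, dlHolds_ofConclusions_dlProves] using fun _ => dlProves_iff_licensedFrom

theorem DL_plusDelta_char_general (T : DTheory Atom) (c : Concl Atom) :
    DLProves T c ↔ ∀ I : DInterp Atom, IsModel T I → DLHolds I c :=
  ⟨fun h _ => h.dlHolds,
    fun h => dlHolds_ofConclusions_dlProves.1 (h _ isModel_ofConclusions_dlProves)⟩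

end Characterization

/-- Characterization of definite provability. -/
theorem DL_plusDelta_char {Atom : Type} [Countable Atom] [DecidableEq Atom]
    (T : DTheory Atom) (hacyc : SupAcyclic T) (q : Lit Atom) :
    DLProves T (Concl.plusDelta q) ↔
      ∀ I : DInterp Atom, IsModel T I → I.del q = some true :=
  DL_plusDelta_char_general T (.plusDelta q)
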